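/- Label-aggregated variational representation of the expected Jensen–Shannon divergence: let X and Y be finite types, let w be a strictly positive pmf on Y, and for each y ∈ Y let P_y and Q_y be strictly positive pmfs on X. Then Σ_y w(y)·JS(P_y‖Q_y) = log 2 + (1/2)·sup_d Σ_y w(y)·( Σ_x P_y(x)·log d(x,y) + Σ_x Q_y(x)·log(1−d(x,y)) ), where the supremum ranges over all functions d : X × Y → (0,1), and it is attained at d*(x,y) = P_y(x)/(P_y(x)+Q_y(x)). -/

import Mathlib

/-- A scaled form of `log u ≤ u - 1`: the tangent line bound for `a * log t` at `t = a / s`. -/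
lemma mul_log_le_mul_log_div_add {a s t : ℝ} (ha : 0 < a) (hs : 0 < s) (ht : 0 < t) :
    a * Real.log t ≤ a * Real.log (a / s) + (t * s - a) := by
  have hlog : Real.log t = Real.log (a / s) + Real.log (t * s / a) := by
    rw [← Real.log_mul (by positivity) (by positivity)]
    congr 1
    field_simp
  have hle := mul_le_mul_of_nonneg_left
    (Real.log_le_sub_one_of_pos (show 0 < t * s / a by positivity)) ha.le
  have hcancel : a * (t * s / a - 1) = t * s - a := by field_simp
  rw [hlog]
  linarith

lemma one_sub_div_add_self {a b : ℝ} (ha : 0 < a) (hb : 0 < b) :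
    1 - a / (a + b) = b / (a + b) := by
  rw [one_sub_div (by positivity), add_sub_cancel_left]

/-- The weighted binary log-likelihood `a * log t + b * log (1 - t)` is maximal at
`t = a / (a + b)`. -/
lemma mul_log_add_mul_log_one_sub_le {a b t : ℝ} (ha : 0 < a) (hb : 0 < b)
    (ht0 : 0 < t) (ht1 : t < 1) :
    a * Real.log t + b * Real.log (1 - t) ≤
      a * Real.log (a / (a + b)) + b * Real.log (1 - a / (a + b)) := by
  rw [one_sub_div_add_self ha hb]
  linarith [mul_log_le_mul_log_div_add ha (add_pos ha hb) ht0,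
    mul_log_le_mul_log_div_add hb (add_pos ha hb) (sub_pos.mpr ht1)]

lemma log_div_half {a s : ℝ} (ha : 0 < a) (hs : 0 < s) :
    Real.log (a / (s / 2)) = Real.log 2 + Real.log (a / s) := by
  rw [← Real.log_mul two_ne_zero (by positivity)]
  congr 1
  field_simp

/-- For a pmf `p`, halving the denominators in `∑ p * log (p / s)` adds `log 2`. -/
lemma sum_mul_log_div_half {X : Type*} [Fintype X] {p s : X → ℝ}
    (hp : ∀ x, 0 < p x) (hs : ∀ x, 0 < s x) (hp1 : ∑ x, p x = 1) :
    ∑ x, p x * Real.log (p x / (s x / 2)) =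
      Real.log 2 + ∑ x, p x * Real.log (p x / s x) := by
  simp_rw [fun x => log_div_half (hp x) (hs x), mul_add, Finset.sum_add_distrib,
    ← Finset.sum_mul, hp1, one_mul]

/-- Label-aggregated variational representation of the expected Jensen–Shannon
divergence: the supremum of the label-weighted discrimination objective over
conditional discriminators `d : X × Y → (0,1)` is attained at
`d*(x,y) = P_y(x)/(P_y(x)+Q_y(x))`, and
`Σ_y w(y)·JS(P_y‖Q_y) = log 2 + (1/2)·sup_d (objective)`. -/
theorem expected_js_variational_representation
    {X Y : Type*} [Fintype X] [Fintype Y]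
    (w : Y → ℝ) (hw0 : ∀ y, 0 < w y) (hw1 : ∑ y : Y, w y = 1)
    (P Q : Y → X → ℝ)
    (hP0 : ∀ y x, 0 < P y x) (hP1 : ∀ y, ∑ x : X, P y x = 1)
    (hQ0 : ∀ y x, 0 < Q y x) (hQ1 : ∀ y, ∑ x : X, Q y x = 1) :
    IsGreatest
      {v : ℝ | ∃ d : X × Y → ℝ, (∀ x y, 0 < d (x, y) ∧ d (x, y) < 1) ∧
        v = ∑ y : Y, w y *
          ((∑ x : X, P y x * Real.log (d (x, y)))
            + (∑ x : X, Q y x * Real.log (1 - d (x, y))))}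
      (∑ y : Y, w y *
        ((∑ x : X, P y x * Real.log (P y x / (P y x + Q y x)))
          + (∑ x : X, Q y x * Real.log (1 - P y x / (P y x + Q y x)))))
    ∧
    (∑ y : Y, w y *
        ((1 / 2) * (∑ x : X, P y x * Real.log (P y x / ((P y x + Q y x) / 2)))
          + (1 / 2) * (∑ x : X, Q y x * Real.log (Q y x / ((P y x + Q y x) / 2)))))
      = Real.log 2 + (1 / 2) *
        (∑ y : Y, w y *
          ((∑ x : X, P y x * Real.log (P y x / (P y x + Q y x)))
            + (∑ x : X, Q y x * Real.log (1 - P y x / (P y x + Q y x))))) := by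
  refine ⟨⟨⟨fun z => P z.2 z.1 / (P z.2 z.1 + Q z.2 z.1), fun x y => ?_, rfl⟩, ?_⟩, ?_⟩
  · have hp := hP0 y x
    have hq := hQ0 y x
    exact ⟨by positivity, (div_lt_one (by positivity)).mpr (by linarith)⟩
  · rintro v ⟨d, hd, rfl⟩
    refine Finset.sum_le_sum fun y _ => mul_le_mul_of_nonneg_left ?_ (hw0 y).le
    rw [← Finset.sum_add_distrib, ← Finset.sum_add_distrib]
    exact Finset.sum_le_sum fun x _ =>
      mul_log_add_mul_log_one_sub_le (hP0 y x) (hQ0 y x) (hd x y).1 (hd x y).2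
  · have hs : ∀ y x, 0 < P y x + Q y x := fun y x => add_pos (hP0 y x) (hQ0 y x)
    simp_rw [fun y x => one_sub_div_add_self (hP0 y x) (hQ0 y x),
      fun y => sum_mul_log_div_half (hP0 y) (hs y) (hP1 y),
      fun y => sum_mul_log_div_half (hQ0 y) (hs y) (hQ1 y)]
    have hlog : Real.log 2 = ∑ y, w y * Real.log 2 := by
      rw [← Finset.sum_mul, hw1, one_mul]
    conv_rhs => rw [hlog, Finset.mul_sum, ← Finset.sum_add_distrib]
    exact Finset.sum_congr rfl fun y _ => by ring
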